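/- Existence of a low-sensitivity coordinate: let A be a randomized map from subsets of {0,1}^n of size ≤ t to {0,1}^{εt}. Then for every t-element set e ⊆ {0,1}^n there exists v ∈ e such that d(A(U_{2^e} ∖ {v}), A(U_{2^e} ∪ {v})) ≤ √(2 ln 2 · ε), where U_{2^e} is the uniform distribution over subsets of e. -/

import Mathlib

open Finset

/-- Statistical distance: half the ℓ1-distance of probability mass functions. -/
noncomputable def statDist {Ω : Type*} [Fintype Ω] (p q : Ω → ℝ) : ℝ :=
  (1 / 2) * ∑ ω, |p ω - q ω|

/-- The distribution of `A(U_{2^e} ∖ {v})`: a uniform subset of `e` with `v`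
removed, fed to the randomized mapping `A` with uniform seed in `R`. -/
noncomputable def eraseDist {n : ℕ} {W R : Type*} [Fintype W] [Fintype R] [DecidableEq W]
    (A : Finset (Fin n → Bool) → R → W) (e : Finset (Fin n → Bool))
    (v : Fin n → Bool) (z : W) : ℝ :=
  ∑ s ∈ e.powerset, ∑ r,
    ((1 : ℝ) / 2 ^ e.card) * (1 / (Fintype.card R : ℝ)) *
      (if A (s.erase v) r = z then 1 else 0)

/-- The distribution of `A(U_{2^e} ∪ {v})`: a uniform subset of `e` with `v`
added, fed to the randomized mapping `A` with uniform seed in `R`. -/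
noncomputable def insertDist {n : ℕ} {W R : Type*} [Fintype W] [Fintype R] [DecidableEq W]
    (A : Finset (Fin n → Bool) → R → W) (e : Finset (Fin n → Bool))
    (v : Fin n → Bool) (z : W) : ℝ :=
  ∑ s ∈ e.powerset, ∑ r,
    ((1 : ℝ) / 2 ^ e.card) * (1 / (Fintype.card R : ℝ)) *
      (if A (insert v s) r = z then 1 else 0)

/-! Encode a subset of `e` by its `±1` indicator vector. For an outcome `z`, the difference of the
probabilities of `z` under the two conditionings on a coordinate `v` is twice the correlation of
this probability with the sign at `v`. Choosing for each `z` the signs that make these correlations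
nonnegative, the statistical distances summed over `v ∈ e` become the expectation of one of `|W|`
signed sums of independent uniform signs, the outcome selecting which one. As in Massart's finite
class lemma, the subgaussian moment generating function of the signed sums bounds this by
`√(2 |e| log |W|)`. -/

open scoped BigOperators

section ExponentialMoments

variable {ι W : Type*} [Fintype W]

theorem exp_expect_le {s : Finset ι} (hs : s.Nonempty) (f : ι → ℝ) :
    Real.exp (𝔼 i ∈ s, f i) ≤ 𝔼 i ∈ s, Real.exp (f i) := by
  have hcard : (#s : ℝ) ≠ 0 := Nat.cast_ne_zero.2 hs.card_ne_zero
  simpa only [expect_eq_sum_div_card, div_eq_inv_mul, mul_sum, smul_eq_mul] using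
    convexOn_exp.map_sum_le (t := s) (w := fun _ ↦ (#s : ℝ)⁻¹) (p := f)
      (fun _ _ ↦ by positivity) (by simp [hcard]) (fun _ _ ↦ Set.mem_univ _)

theorem exp_sum_mul_le_sum_exp {p : W → ℝ} (hp : p ∈ stdSimplex ℝ W) (x : W → ℝ) :
    Real.exp (∑ z, p z * x z) ≤ ∑ z, Real.exp (x z) := by
  have hp_le_one (z : W) : p z ≤ 1 :=
    (single_le_sum (fun w _ ↦ hp.1 w) (mem_univ z)).trans_eq hp.2
  calc Real.exp (∑ z, p z * x z)
      ≤ ∑ z, p z * Real.exp (x z) :=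
        convexOn_exp.map_sum_le (fun z _ ↦ hp.1 z) hp.2 (fun _ _ ↦ Set.mem_univ _)
    _ ≤ ∑ z, Real.exp (x z) :=
        sum_le_sum fun z _ ↦ mul_le_of_le_one_left (Real.exp_pos _).le (hp_le_one z)

theorem exp_expect_sum_mul_le {s : Finset ι} (hs : s.Nonempty) {K : ι → W → ℝ}
    (hK : ∀ i ∈ s, K i ∈ stdSimplex ℝ W) (X : ι → W → ℝ) :
    Real.exp (𝔼 i ∈ s, ∑ z, K i z * X i z) ≤ ∑ z, 𝔼 i ∈ s, Real.exp (X i z) :=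
  calc Real.exp (𝔼 i ∈ s, ∑ z, K i z * X i z)
      ≤ 𝔼 i ∈ s, Real.exp (∑ z, K i z * X i z) := exp_expect_le hs _
    _ ≤ 𝔼 i ∈ s, ∑ z, Real.exp (X i z) :=
        expect_le_expect fun i hi ↦ exp_sum_mul_le_sum_exp (hK i hi) (X i)
    _ = ∑ z, 𝔼 i ∈ s, Real.exp (X i z) := expect_sum_comm _ _ _

end ExponentialMoments

section RandomSubset

variable {α W : Type*} [DecidableEq α] [Fintype W]

/-- The coordinate at `v` of the indicator vector of `s`, as a sign: `-1` if `v` belongs to `s`,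
and `1` otherwise. -/
def coordSign (v : α) (s : Finset α) : ℝ :=
  if v ∈ s then -1 else 1

/-- The degree-one Fourier–Walsh coefficient at `v` of a function on the cube of subsets of `e`,
that is, the correlation of the function with the sign of a uniform subset at `v`. -/
noncomputable def coordCoeff (e : Finset α) (v : α) (f : Finset α → ℝ) : ℝ :=
  𝔼 s ∈ e.powerset, coordSign v s * f s

theorem expect_erase_sub_expect_insert {e : Finset α} {v : α} (hv : v ∈ e) (f : Finset α → ℝ) :
    𝔼 s ∈ e.powerset, f (s.erase v) - 𝔼 s ∈ e.powerset, f (insert v s)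
      = 2 * coordCoeff e v f := by
  obtain ⟨e', hve', rfl⟩ : ∃ e', v ∉ e' ∧ insert v e' = e :=
    ⟨e.erase v, notMem_erase v e, insert_erase hv⟩
  simp only [coordCoeff, expect_eq_sum_div_card, ← sub_div, ← mul_div_assoc,
    sum_powerset_insert hve', ← sum_add_distrib, ← sum_sub_distrib, mul_sum]
  congr 1
  refine sum_congr rfl fun s hs ↦ ?_
  have hvs : v ∉ s := fun h ↦ hve' (mem_powerset.1 hs h)
  simp only [coordSign, hvs, erase_eq_of_notMem hvs, erase_insert hvs, insert_idem,
    mem_insert_self, if_true, if_false]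
  ring

theorem statDist_expect_erase_expect_insert {e : Finset α} {v : α} (hv : v ∈ e)
    (K : Finset α → W → ℝ) :
    statDist (𝔼 s ∈ e.powerset, K (s.erase v)) (𝔼 s ∈ e.powerset, K (insert v s))
      = ∑ z, |coordCoeff e v (K · z)| := by
  rw [statDist, mul_sum]
  refine sum_congr rfl fun z _ ↦ ?_
  rw [expect_apply, expect_apply, expect_erase_sub_expect_insert hv (K · z), abs_mul, abs_two]
  ring

theorem expect_exp_sum_mul_coordSign (e : Finset α) (a : α → ℝ) :
    𝔼 s ∈ e.powerset, Real.exp (∑ v ∈ e, a v * coordSign v s) = ∏ v ∈ e, Real.cosh (a v) := by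
  have exp_eq_prod (s) (hs : s ∈ e.powerset) : Real.exp (∑ v ∈ e, a v * coordSign v s)
      = (∏ v ∈ s, Real.exp (-a v)) * ∏ v ∈ e \ s, Real.exp (a v) := by
    rw [Real.exp_sum, ← prod_sdiff (mem_powerset.1 hs), mul_comm]
    congr 1
    · exact prod_congr rfl fun v hv ↦ by simp [coordSign, hv]
    · exact prod_congr rfl fun v hv ↦ by simp [coordSign, (mem_sdiff.1 hv).2]
  rw [expect_congr rfl exp_eq_prod, expect_eq_sum_div_card, ← prod_add]
  simp [Real.cosh_eq, prod_div_distrib, add_comm]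

theorem expect_exp_sum_mul_coordSign_le (e : Finset α) (a : α → ℝ) :
    𝔼 s ∈ e.powerset, Real.exp (∑ v ∈ e, a v * coordSign v s)
      ≤ Real.exp ((∑ v ∈ e, a v ^ 2) / 2) := by
  rw [expect_exp_sum_mul_coordSign, sum_div, Real.exp_sum]
  exact prod_le_prod (fun v _ ↦ (Real.cosh_pos _).le) fun v _ ↦ Real.cosh_le_exp_half_sq _

theorem exp_mul_sum_abs_coordCoeff_le {e : Finset α} {K : Finset α → W → ℝ}
    (hK : ∀ s ⊆ e, K s ∈ stdSimplex ℝ W) (l : ℝ) :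
    Real.exp (l * ∑ v ∈ e, ∑ z, |coordCoeff e v (K · z)|)
      ≤ Fintype.card W * Real.exp (#e * l ^ 2 / 2) := by
  let σ (z : W) (v : α) : ℝ := SignType.sign (coordCoeff e v (K · z))
  have abs_eq (z : W) (v : α) : |coordCoeff e v (K · z)| = σ z v * coordCoeff e v (K · z) :=
    (sign_mul_self _).symm
  have sq_le (z : W) (v : α) : (l * σ z v) ^ 2 ≤ l ^ 2 := by
    rw [mul_pow]
    refine mul_le_of_le_one_right (sq_nonneg l) ?_
    dsimp only [σ]
    cases SignType.sign (coordCoeff e v (K · z)) <;> simp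
  have signed_sum : l * ∑ v ∈ e, ∑ z, |coordCoeff e v (K · z)|
      = 𝔼 s ∈ e.powerset, ∑ z, K s z * ∑ v ∈ e, l * σ z v * coordSign v s := by
    simp only [abs_eq, expect_sum_comm, mul_sum]
    rw [sum_comm]
    refine sum_congr rfl fun z _ ↦ sum_congr rfl fun v _ ↦ ?_
    rw [← mul_assoc, coordCoeff, mul_expect]
    exact expect_congr rfl fun s _ ↦ by ring
  rw [signed_sum]
  calc Real.exp (𝔼 s ∈ e.powerset, ∑ z, K s z * ∑ v ∈ e, l * σ z v * coordSign v s)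
      ≤ ∑ z, 𝔼 s ∈ e.powerset, Real.exp (∑ v ∈ e, l * σ z v * coordSign v s) :=
        exp_expect_sum_mul_le (powerset_nonempty e) (fun s hs ↦ hK s (mem_powerset.1 hs)) _
    _ ≤ ∑ z, Real.exp ((∑ v ∈ e, (l * σ z v) ^ 2) / 2) :=
        sum_le_sum fun z _ ↦ expect_exp_sum_mul_coordSign_le e _
    _ ≤ ∑ _z : W, Real.exp ((∑ _v ∈ e, l ^ 2) / 2) := by
        gcongr ∑ z, Real.exp ((∑ v ∈ e, ?_) / 2) with z _ v _
        exact sq_le z v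
    _ = Fintype.card W * Real.exp (#e * l ^ 2 / 2) := by simp

theorem expect_statDist_erase_insert_le {e : Finset α} {K : Finset α → W → ℝ}
    (hK : ∀ s ⊆ e, K s ∈ stdSimplex ℝ W) :
    𝔼 v ∈ e, statDist (𝔼 s ∈ e.powerset, K (s.erase v)) (𝔼 s ∈ e.powerset, K (insert v s))
      ≤ √(2 * Real.log (Fintype.card W) / #e) := by
  obtain rfl | he := e.eq_empty_or_nonempty
  · simp
  rw [expect_congr rfl fun v hv ↦ statDist_expect_erase_expect_insert hv K]
  set d : ℝ := 𝔼 v ∈ e, ∑ z, |coordCoeff e v (K · z)|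
  have hsum : #e * d = ∑ v ∈ e, ∑ z, |coordCoeff e v (K · z)| := card_mul_expect _ _
  -- The parameter `l = d` optimizes the exponential bound.
  have hexp : Real.exp (#e * d ^ 2 / 2) ≤ Fintype.card W :=
    calc Real.exp (#e * d ^ 2 / 2)
        = Real.exp (d * (#e * d)) / Real.exp (#e * d ^ 2 / 2) := by
          rw [← Real.exp_sub]
          ring_nf
      _ ≤ Fintype.card W := by
          rw [div_le_iff₀ (Real.exp_pos _), hsum]
          exact exp_mul_sum_abs_coordCoeff_le hK d
  have hlog : #e * d ^ 2 / 2 ≤ Real.log (Fintype.card W) :=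
    (Real.le_log_iff_exp_le ((Real.exp_pos _).trans_le hexp)).2 hexp
  refine Real.le_sqrt_of_sq_le ?_
  rw [le_div_iff₀ (by exact_mod_cast he.card_pos)]
  linarith

theorem exists_low_sensitivity_element_general {e : Finset α} (he : e.Nonempty)
    {K : Finset α → W → ℝ} (hK : ∀ s ⊆ e, K s ∈ stdSimplex ℝ W) {ε : ℝ}
    (hW : (Fintype.card W : ℝ) ≤ 2 ^ (ε * #e)) :
    ∃ v ∈ e, statDist (𝔼 s ∈ e.powerset, K (s.erase v)) (𝔼 s ∈ e.powerset, K (insert v s))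
      ≤ √(2 * Real.log 2 * ε) := by
  refine exists_le_of_expect_le he <|
    (expect_statDist_erase_insert_le hK).trans (Real.sqrt_le_sqrt ?_)
  have hcard : (0 : ℝ) < Fintype.card W := by
    obtain ⟨z, -, -⟩ := exists_ne_zero_of_sum_ne_zero
      ((hK ∅ (empty_subset e)).2.trans_ne one_ne_zero)
    exact_mod_cast Fintype.card_pos_iff.2 ⟨z⟩
  have hlog : Real.log (Fintype.card W) ≤ ε * #e * Real.log 2 :=
    (Real.log_le_log hcard hW).trans_eq (Real.log_rpow two_pos _)
  rw [div_le_iff₀ (by exact_mod_cast he.card_pos)]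
  linarith

end RandomSubset

section UniformSeed

variable {W R : Type*} [Fintype R] [DecidableEq W]

/-- The probability mass function of `f r` for a uniform seed `r`. It turns a mapping randomized by
a seed into a family of distributions on the outcomes. -/
noncomputable def seedLaw (f : R → W) (z : W) : ℝ :=
  𝔼 r, if f r = z then 1 else 0

theorem seedLaw_mem_stdSimplex [Fintype W] [Nonempty R] (f : R → W) :
    seedLaw f ∈ stdSimplex ℝ W := by
  refine ⟨fun z ↦ expect_nonneg fun r _ ↦ by positivity, ?_⟩
  simp [seedLaw, ← expect_sum_comm]

variable {n : ℕ} [Fintype W] (A : Finset (Fin n → Bool) → R → W) (e : Finset (Fin n → Bool))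
  (v : Fin n → Bool)

theorem eraseDist_eq_expect_seedLaw :
    eraseDist A e v = 𝔼 s ∈ e.powerset, seedLaw (A (s.erase v)) := by
  ext z
  simp only [eraseDist, seedLaw, expect_apply, expect_eq_sum_div_card, card_powerset, card_univ,
    ← mul_sum, ← sum_div, Nat.cast_pow, Nat.cast_ofNat]
  ring

theorem insertDist_eq_expect_seedLaw :
    insertDist A e v = 𝔼 s ∈ e.powerset, seedLaw (A (insert v s)) := by
  ext z
  simp only [insertDist, seedLaw, expect_apply, expect_eq_sum_div_card, card_powerset, card_univ,
    ← mul_sum, ← sum_div, Nat.cast_pow, Nat.cast_ofNat]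
  ring

end UniformSeed

/-- Existence of a low-sensitivity coordinate.  If `A` is a
randomized map from subsets of `{0,1}^n` of size `≤ t` to a range of size at
most `2^{εt}`, then every `t`-element set `e ⊆ {0,1}^n` contains some `v` with
`d(A(U_{2^e} ∖ {v}), A(U_{2^e} ∪ {v})) ≤ √(2 ln 2 · ε)`. -/
theorem exists_low_sensitivity_element {n : ℕ} {W R : Type*} [Fintype W] [Fintype R]
    [DecidableEq W] [Nonempty R]
    (t : ℕ) (ht : 0 < t) (ε : ℝ) (hε : 0 < ε)
    (A : Finset (Fin n → Bool) → R → W)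
    (hW : (Fintype.card W : ℝ) ≤ 2 ^ (ε * t))
    (e : Finset (Fin n → Bool)) (he : e.card = t) :
    ∃ v ∈ e, statDist (eraseDist A e v) (insertDist A e v)
      ≤ Real.sqrt (2 * Real.log 2 * ε) := by
  subst he
  simpa only [eraseDist_eq_expect_seedLaw, insertDist_eq_expect_seedLaw] using
    exists_low_sensitivity_element_general (card_pos.1 ht)
      (fun s _ ↦ seedLaw_mem_stdSimplex (A s)) hW
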